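/- Let log J be an α-Hölder g-function with unique g-measure μ. Then for every α-Hölder a:Ω→ℂ and all fixed x,y∈Ω, lim_{s→1⁺}(s−1)ζ₊(s) = lim_{s→1⁺}(s−1)ζ₋(s); in particular both limits equal (1/h_μ(σ)) ∫_Ω a dμ. -/

import Mathlib

open Real MeasureTheory Filter Topology Set

open scoped Classical

namespace GS

/-- The full shift space `Ω = 𝒜^ℕ`. -/
abbrev Omega (𝒜 : Type) : Type := ℕ → 𝒜

variable {𝒜 : Type}

/-- The left shift `σ(x₁,x₂,…) = (x₂,x₃,…)`. -/
def shift (x : Omega 𝒜) : Omega 𝒜 := fun n => x (n + 1)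

/-- Prepending a symbol: `qx = (q,x₁,x₂,…)`. -/
def cons (q : 𝒜) (x : Omega 𝒜) : Omega 𝒜 := fun n => Nat.casesOn n q x

/-- Concatenation `wx` of a finite word `w ∈ 𝒜^k` with `x ∈ Ω`. -/
def concat {k : ℕ} (w : Fin k → 𝒜) (x : Omega 𝒜) : Omega 𝒜 :=
  fun n => if h : n < k then w ⟨n, h⟩ else x (n - k)

/-- The metric `d(x,y) = 2^{-N(x,y)}`, `N(x,y) = inf{k ≥ 1 : x_k ≠ y_k}`
(sequences are indexed from `0` in Lean, whence the `+ 1`). -/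
noncomputable def dOmega (x y : Omega 𝒜) : ℝ :=
  if x = y then 0 else (1 / 2 : ℝ) ^ (sInf {k : ℕ | x k ≠ y k} + 1)

/-- `a : Ω → E` is `α`-Hölder (w.r.t. `dOmega`):
`Hol_α(a) = sup_{x≠y} ‖a x - a y‖ / d(x,y)^α < ∞`. -/
def IsHolderW (α : ℝ) {E : Type*} [NormedAddCommGroup E] (a : Omega 𝒜 → E) : Prop :=
  ∃ C : ℝ, ∀ x y : Omega 𝒜, ‖a x - a y‖ ≤ C * (dOmega x y) ^ α

/-- The Hölder constant `Hol_α(a) = sup_{x≠y} ‖a x - a y‖ / d(x,y)^α`. -/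
noncomputable def HolConst (α : ℝ) {E : Type*} [NormedAddCommGroup E] (a : Omega 𝒜 → E) : ℝ :=
  sSup {r : ℝ | ∃ x y : Omega 𝒜, x ≠ y ∧ r = ‖a x - a y‖ / (dOmega x y) ^ α}

/-- `J` is a `g`-function: continuous, strictly positive, with `∑_{q∈𝒜} J(qx) = 1`. -/
def IsGFunction [Fintype 𝒜] [TopologicalSpace 𝒜] (J : Omega 𝒜 → ℝ) : Prop :=
  Continuous J ∧ (∀ x, 0 < J x) ∧ ∀ x : Omega 𝒜, ∑ q : 𝒜, J (cons q x) = 1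

/-- The Ruelle transfer operator `(L_f φ)(x) = ∑_{q∈𝒜} e^{f(qx)} φ(qx)`. -/
noncomputable def ruelle [Fintype 𝒜] {E : Type*} [AddCommMonoid E] [Module ℝ E]
    (f : Omega 𝒜 → ℝ) (φ : Omega 𝒜 → E) : Omega 𝒜 → E :=
  fun x => ∑ q : 𝒜, Real.exp (f (cons q x)) • φ (cons q x)

/-- Birkhoff sum `S_k(f) = ∑_{j=0}^{k-1} f ∘ σ^j`. -/
def birkhoff (f : Omega 𝒜 → ℝ) (k : ℕ) (x : Omega 𝒜) : ℝ :=
  ∑ j ∈ Finset.range k, f (shift^[j] x)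

/-- `𝕁(wx) = exp (S_k(log J)(wx))` for a word `w` of length `k`. -/
noncomputable def JBirk (J : Omega 𝒜 → ℝ) (k : ℕ) (w : Fin k → 𝒜) (x : Omega 𝒜) : ℝ :=
  Real.exp (birkhoff (fun z => Real.log (J z)) k (concat w x))

/-- `ζ₊(s) = ∑_{k≥1} ∑_{w∈𝒜^k} a(wx) 𝕁(wx)^s`. -/
noncomputable def zetaPlus [Fintype 𝒜] (J : Omega 𝒜 → ℝ) (a : Omega 𝒜 → ℂ) (x : Omega 𝒜)
    (s : ℝ) : ℂ :=
  ∑' k : ℕ, ∑ w : Fin (k + 1) → 𝒜, a (concat w x) * (((JBirk J (k + 1) w x) ^ s : ℝ) : ℂ)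

/-- `ζ₋(s) = ∑_{k≥1} ∑_{w∈𝒜^k} a(wy) 𝕁(wx)^s`. -/
noncomputable def zetaMinus [Fintype 𝒜] (J : Omega 𝒜 → ℝ) (a : Omega 𝒜 → ℂ) (x y : Omega 𝒜)
    (s : ℝ) : ℂ :=
  ∑' k : ℕ, ∑ w : Fin (k + 1) → 𝒜, a (concat w y) * (((JBirk J (k + 1) w x) ^ s : ℝ) : ℂ)

/-- `L_{log J}^* μ = μ`, i.e. `μ` is a `g`-measure of `J`, tested against continuous functions. -/
def IsGMeasure [Fintype 𝒜] [TopologicalSpace 𝒜] [MeasurableSpace 𝒜]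
    (J : Omega 𝒜 → ℝ) (μ : Measure (Omega 𝒜)) : Prop :=
  IsProbabilityMeasure μ ∧
    ∀ φ : Omega 𝒜 → ℂ, Continuous φ →
      ∫ x, ruelle (fun z => Real.log (J z)) φ x ∂μ = ∫ x, φ x ∂μ

/-- The cylinder set determined by a finite word. -/
def cyl {k : ℕ} (w : Fin k → 𝒜) : Set (Omega 𝒜) := {x | ∀ i : Fin k, x (i : ℕ) = w i}

/-- Entropy of the partition into cylinders of length `n`. -/
noncomputable def blockEntropy [Fintype 𝒜] [MeasurableSpace 𝒜] (μ : Measure (Omega 𝒜))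
    (n : ℕ) : ℝ :=
  ∑ w : Fin n → 𝒜, Real.negMulLog (μ (cyl w)).toReal

/-- Kolmogorov–Sinai entropy `h_μ(σ)` of a shift-invariant measure, computed through the
generating partition into cylinders: `h_μ(σ) = lim_n H_n/n = inf_{n≥1} H_n/n`. -/
noncomputable def KSentropy [Fintype 𝒜] [MeasurableSpace 𝒜] (μ : Measure (Omega 𝒜)) : ℝ :=
  ⨅ n : ℕ, blockEntropy μ (n + 1) / (n + 1)

/-- Topological pressure `P(f) = sup {h_μ(σ) + ∫ f dμ}` over shift-invariant Borel
probability measures. -/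
noncomputable def pressure [Fintype 𝒜] [MeasurableSpace 𝒜] (f : Omega 𝒜 → ℝ) : ℝ :=
  sSup {r : ℝ | ∃ μ : Measure (Omega 𝒜), IsProbabilityMeasure μ ∧
    Measure.map shift μ = μ ∧ r = KSentropy μ + ∫ x, f x ∂μ}

/-- `μ` is an equilibrium state of `f`. -/
def IsEquilibrium [Fintype 𝒜] [MeasurableSpace 𝒜] (f : Omega 𝒜 → ℝ)
    (μ : Measure (Omega 𝒜)) : Prop :=
  IsProbabilityMeasure μ ∧ Measure.map shift μ = μ ∧
    KSentropy μ + ∫ x, f x ∂μ = pressure f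

/-- The Walters class `W(Ω,σ)`:
`sup_{n≥1} sup_{w∈𝒜^n} |S_n(f)(wx) − S_n(f)(wy)| → 0` as `d(x,y) → 0`. -/
def WaltersClass [TopologicalSpace 𝒜] (f : Omega 𝒜 → ℝ) : Prop :=
  Continuous f ∧ ∀ ε > (0:ℝ), ∃ δ > (0:ℝ), ∀ x y : Omega 𝒜, dOmega x y < δ →
    ∀ (n : ℕ) (w : Fin n → 𝒜),
      |birkhoff f n (concat w x) - birkhoff f n (concat w y)| ≤ ε

/-- The set `W*` of finite (nonempty) words over `𝒜`. -/
def Words (𝒜 : Type) : Type := Σ k : ℕ, Fin (k + 1) → 𝒜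

end GS

namespace GS

variable {𝒜 : Type}

lemma concat_cons {k : ℕ} (q : 𝒜) (w : Fin k → 𝒜) (x : Omega 𝒜) :
    concat (Fin.cons q w : Fin (k + 1) → 𝒜) x = cons q (concat w x) := by
  funext n
  cases n with
  | zero => simp [concat, cons]
  | succ n =>
    by_cases h : n < k
    · have h' : n + 1 < k + 1 := by omega
      simp only [concat, cons, h, h', dif_pos]
      exact Fin.cons_succ (α := fun _ => 𝒜) q w ⟨n, h⟩
    · have h' : ¬ (n + 1 < k + 1) := by omega
      simp only [concat, cons, h, dif_neg, not_false_eq_true, h', Nat.add_sub_add_right]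

lemma shift_cons (q : 𝒜) (x : Omega 𝒜) : shift (cons q x) = x := by
  funext n; simp [shift, cons]

lemma birkhoff_cons (f : Omega 𝒜 → ℝ) (k : ℕ) (q : 𝒜) (z : Omega 𝒜) :
    birkhoff f (k + 1) (cons q z) = f (cons q z) + birkhoff f k z := by
  unfold birkhoff
  rw [Finset.sum_range_succ']
  simp only [Function.iterate_succ, Function.comp, shift_cons, Function.iterate_zero, id]
  ring

lemma JBirk_cons {J : Omega 𝒜 → ℝ} (hpos : ∀ x, 0 < J x) (k : ℕ) (q : 𝒜) (w : Fin k → 𝒜)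
    (x : Omega 𝒜) : JBirk J (k + 1) (Fin.cons q w : Fin (k + 1) → 𝒜) x
      = J (cons q (concat w x)) * JBirk J k w x := by
  unfold JBirk
  rw [concat_cons, birkhoff_cons, Real.exp_add, Real.exp_log (hpos _)]

lemma JBirk_pos (J : Omega 𝒜 → ℝ) (k : ℕ) (w : Fin k → 𝒜) (x : Omega 𝒜) : 0 < JBirk J k w x :=
  Real.exp_pos _

lemma sum_words [Fintype 𝒜] {M : Type*} [AddCommMonoid M] (k : ℕ) (F : (Fin (k + 1) → 𝒜) → M) :
    ∑ w, F w = ∑ w : Fin k → 𝒜, ∑ q : 𝒜, F (Fin.cons q w : Fin (k + 1) → 𝒜) := by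
  rw [← (Fin.consEquiv (fun _ : Fin (k + 1) => 𝒜)).sum_comp, Fintype.sum_prod_type, Finset.sum_comm]
  rfl

/-- real transfer operator with weight `J^s` -/
noncomputable def T [Fintype 𝒜] (J : Omega 𝒜 → ℝ) (s : ℝ) (f : Omega 𝒜 → ℝ) : Omega 𝒜 → ℝ :=
  fun x => ∑ q : 𝒜, (J (cons q x)) ^ s * f (cons q x)

lemma concat_zero (w : Fin 0 → 𝒜) (x : Omega 𝒜) : concat w x = x := by
  funext n; simp [concat]

lemma T_iter [Fintype 𝒜] {J : Omega 𝒜 → ℝ} (hpos : ∀ x, 0 < J x) (s : ℝ) (k : ℕ) :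
    ∀ (f : Omega 𝒜 → ℝ) (x : Omega 𝒜),
    (T J s)^[k] f x = ∑ w : Fin k → 𝒜, (JBirk J k w x) ^ s * f (concat w x) := by
  induction k with
  | zero =>
    intro f x
    simp [JBirk, birkhoff, concat_zero]
  | succ k ih =>
    intro f x
    rw [Function.iterate_succ, Function.comp, ih, sum_words]
    refine Finset.sum_congr rfl fun w _ => ?_
    simp only [T]
    rw [Finset.mul_sum]
    refine Finset.sum_congr rfl fun q _ => ?_
    rw [JBirk_cons hpos, concat_cons, Real.mul_rpow (hpos _).le (JBirk_pos _ _ _ _).le]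
    ring

section ops
variable [Fintype 𝒜] {J : Omega 𝒜 → ℝ}

lemma T_sub (s : ℝ) (f g : Omega 𝒜 → ℝ) :
    T J s (fun z => f z - g z) = fun z => T J s f z - T J s g z := by
  funext x; simp [T, mul_sub, Finset.sum_sub_distrib]

lemma T_smul (s c : ℝ) (f : Omega 𝒜 → ℝ) :
    T J s (fun z => c * f z) = fun z => c * T J s f z := by
  funext x; simp only [T, Finset.mul_sum]; exact Finset.sum_congr rfl fun _ _ => by ring

lemma T_iter_add (s : ℝ) (k : ℕ) : ∀ (f g : Omega 𝒜 → ℝ),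
    (T J s)^[k] (fun z => f z + g z) = fun z => (T J s)^[k] f z + (T J s)^[k] g z := by
  induction k with
  | zero => intro f g; rfl
  | succ k ih =>
    intro f g
    simp only [Function.iterate_succ, Function.comp]
    rw [← ih]; congr 1
    funext x; simp [T, mul_add, Finset.sum_add_distrib]

lemma T_iter_smul (s c : ℝ) (k : ℕ) : ∀ (f : Omega 𝒜 → ℝ),
    (T J s)^[k] (fun z => c * f z) = fun z => c * (T J s)^[k] f z := by
  induction k with
  | zero => intro f; rfl
  | succ k ih =>
    intro f
    simp only [Function.iterate_succ, Function.comp]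
    rw [← ih, T_smul]

lemma T_bound (hpos : ∀ x, 0 < J x) (hsum : ∀ x : Omega 𝒜, ∑ q : 𝒜, J (cons q x) = 1)
    {c : ℝ} (hc : ∀ z, Real.log (J z) ≤ -c) {s : ℝ} (hs : 1 ≤ s)
    {f : Omega 𝒜 → ℝ} {M : ℝ} (hf : ∀ z, |f z| ≤ M) (x : Omega 𝒜) :
    |T J s f x| ≤ Real.exp (-(c * (s - 1))) * M := by
  have hM : 0 ≤ M := (abs_nonneg _).trans (hf x)
  calc |T J s f x| ≤ ∑ q : 𝒜, |(J (cons q x)) ^ s * f (cons q x)| := Finset.abs_sum_le_sum_abs _ _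
    _ ≤ ∑ q : 𝒜, J (cons q x) * (Real.exp (-(c * (s - 1))) * M) := by
      refine Finset.sum_le_sum fun q _ => ?_
      have hp := hpos (cons q x)
      have h1 : (J (cons q x)) ^ s ≤ J (cons q x) * Real.exp (-(c * (s - 1))) := by
        have : s = 1 + (s - 1) := by ring
        rw [this, Real.rpow_add hp, Real.rpow_one, Real.rpow_def_of_pos hp]
        refine mul_le_mul_of_nonneg_left (Real.exp_le_exp.2 ?_) hp.le
        nlinarith [hc (cons q x)]
      rw [abs_mul, abs_of_pos (Real.rpow_pos_of_pos hp s), ← mul_assoc]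
      exact mul_le_mul h1 (hf _) (abs_nonneg _) (by positivity)
    _ = _ := by rw [← Finset.sum_mul, hsum, one_mul]

lemma T_iter_bound (hpos : ∀ x, 0 < J x) (hsum : ∀ x : Omega 𝒜, ∑ q : 𝒜, J (cons q x) = 1)
    {c : ℝ} (hc : ∀ z, Real.log (J z) ≤ -c) {s : ℝ} (hs : 1 ≤ s) (k : ℕ) :
    ∀ {f : Omega 𝒜 → ℝ} {M : ℝ} (_ : ∀ z, |f z| ≤ M) (x : Omega 𝒜),
    |(T J s)^[k] f x| ≤ (Real.exp (-(c * (s - 1)))) ^ k * M := by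
  induction k with
  | zero => intro f M hf x; simpa using hf x
  | succ k ih =>
    intro f M hf x
    rw [Function.iterate_succ, Function.comp, pow_succ, mul_assoc]
    exact ih (T_bound hpos hsum hc hs hf) x

/-- the resolvent sum -/
noncomputable def R (J : Omega 𝒜 → ℝ) (s : ℝ) (f : Omega 𝒜 → ℝ) (x : Omega 𝒜) : ℝ :=
  ∑' k : ℕ, (T J s)^[k + 1] f x

lemma R_summable (hpos : ∀ x, 0 < J x) (hsum : ∀ x : Omega 𝒜, ∑ q : 𝒜, J (cons q x) = 1)
    {c : ℝ} (hc0 : 0 < c) (hc : ∀ z, Real.log (J z) ≤ -c) {s : ℝ} (hs : 1 < s)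
    {f : Omega 𝒜 → ℝ} {M : ℝ} (hf : ∀ z, |f z| ≤ M) (x : Omega 𝒜) :
    Summable (fun k : ℕ => (T J s)^[k + 1] f x) := by
  have hr : Real.exp (-(c * (s - 1))) < 1 := by
    rw [Real.exp_lt_one_iff]; nlinarith
  refine Summable.of_norm_bounded
    (g := fun k : ℕ => (Real.exp (-(c * (s - 1)))) ^ (k + 1) * M) ?_ ?_
  · exact ((summable_nat_add_iff 1).2
      (summable_geometric_of_lt_one (Real.exp_pos _).le hr)).mul_right M
  · intro k; exact T_iter_bound hpos hsum hc hs.le (k + 1) hf x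

lemma R_bound (hpos : ∀ x, 0 < J x) (hsum : ∀ x : Omega 𝒜, ∑ q : 𝒜, J (cons q x) = 1)
    {c : ℝ} (hc0 : 0 < c) (hc : ∀ z, Real.log (J z) ≤ -c) {s : ℝ} (hs : 1 < s)
    {f : Omega 𝒜 → ℝ} {M : ℝ} (hf : ∀ z, |f z| ≤ M) (x : Omega 𝒜) :
    (s - 1) * |R J s f x| ≤ M / c := by
  have hM : 0 ≤ M := (abs_nonneg _).trans (hf x)
  set ρ := Real.exp (-(c * (s - 1))) with hρ
  have hρ0 : 0 < ρ := Real.exp_pos _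
  have hr : ρ < 1 := by
    rw [hρ, Real.exp_lt_one_iff]; nlinarith
  have hsm : Summable (fun k : ℕ => ρ ^ (k + 1) * M) := ((summable_nat_add_iff 1).2
      (summable_geometric_of_lt_one hρ0.le hr)).mul_right M
  have h1 : |R J s f x| ≤ ∑' k : ℕ, ρ ^ (k + 1) * M := by
    unfold R
    rw [← Real.norm_eq_abs]
    exact tsum_of_norm_bounded hsm.hasSum fun k => T_iter_bound hpos hsum hc hs.le (k + 1) hf x
  have h2 : ∑' k : ℕ, ρ ^ (k + 1) * M = ρ * (1 - ρ)⁻¹ * M := by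
    rw [tsum_mul_right]
    simp_rw [pow_succ']
    rw [tsum_mul_left, tsum_geometric_of_lt_one hρ0.le hr]
  have h3 : c * (s - 1) * ρ ≤ 1 - ρ := by
    have : ρ * Real.exp (c * (s - 1)) = 1 := by rw [hρ, ← Real.exp_add]; simp
    nlinarith [Real.add_one_le_exp (c * (s - 1))]
  have h4 : (s - 1) * (ρ * (1 - ρ)⁻¹) ≤ 1 / c := by
    rw [le_div_iff₀ hc0]
    have : (s - 1) * (ρ * (1 - ρ)⁻¹) * c = (c * (s - 1) * ρ) / (1 - ρ) := by
      rw [div_eq_mul_inv]; ring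
    rw [this, div_le_one (by linarith)]; exact h3
  calc (s - 1) * |R J s f x| ≤ (s - 1) * (ρ * (1 - ρ)⁻¹ * M) := by
        rw [← h2]; exact mul_le_mul_of_nonneg_left h1 (by linarith)
    _ = (s - 1) * (ρ * (1 - ρ)⁻¹) * M := by ring
    _ ≤ 1 / c * M := mul_le_mul_of_nonneg_right h4 hM
    _ = M / c := by ring

lemma R_add (hpos : ∀ x, 0 < J x) (hsum : ∀ x : Omega 𝒜, ∑ q : 𝒜, J (cons q x) = 1)
    {c : ℝ} (hc0 : 0 < c) (hc : ∀ z, Real.log (J z) ≤ -c) {s : ℝ} (hs : 1 < s)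
    {f g : Omega 𝒜 → ℝ} {M N : ℝ} (hf : ∀ z, |f z| ≤ M) (hg : ∀ z, |g z| ≤ N) (x : Omega 𝒜) :
    R J s (fun z => f z + g z) x = R J s f x + R J s g x := by
  unfold R
  rw [← (R_summable hpos hsum hc0 hc hs hf x).tsum_add (R_summable hpos hsum hc0 hc hs hg x)]
  simp_rw [T_iter_add]

lemma R_smul (s c : ℝ) (f : Omega 𝒜 → ℝ) (x : Omega 𝒜) :
    R J s (fun z => c * f z) x = c * R J s f x := by
  unfold R
  simp_rw [T_iter_smul]
  rw [tsum_mul_left]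

lemma R_sub (hpos : ∀ x, 0 < J x) (hsum : ∀ x : Omega 𝒜, ∑ q : 𝒜, J (cons q x) = 1)
    {c : ℝ} (hc0 : 0 < c) (hc : ∀ z, Real.log (J z) ≤ -c) {s : ℝ} (hs : 1 < s)
    {f g : Omega 𝒜 → ℝ} {M N : ℝ} (hf : ∀ z, |f z| ≤ M) (hg : ∀ z, |g z| ≤ N) (x : Omega 𝒜) :
    R J s (fun z => f z - g z) x = R J s f x - R J s g x := by
  have h : (fun z => f z - g z) = fun z => f z + (-1) * g z := by funext z; ring
  rw [h, R_add hpos hsum hc0 hc hs hf (g := fun z => (-1) * g z) (N := N)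
    (by intro z; simpa using hg z), R_smul]
  ring

/-- Telescoping. -/
lemma R_tele (hpos : ∀ x, 0 < J x) (hsum : ∀ x : Omega 𝒜, ∑ q : 𝒜, J (cons q x) = 1)
    {c : ℝ} (hc0 : 0 < c) (hc : ∀ z, Real.log (J z) ≤ -c) {s : ℝ} (hs : 1 < s)
    {f : Omega 𝒜 → ℝ} {M : ℝ} (hf : ∀ z, |f z| ≤ M) (x : Omega 𝒜) :
    R J s (fun z => f z - T J s f z) x = T J s f x := by
  rw [R_sub hpos hsum hc0 hc hs hf (T_bound hpos hsum hc hs.le hf)]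
  have h := (R_summable hpos hsum hc0 hc hs hf x).tsum_eq_zero_add
  have h2 : R J s (T J s f) x = ∑' k : ℕ, (T J s)^[k + 1 + 1] f x := by
    unfold R; rfl
  rw [h2]
  unfold R
  rw [h]
  simp

lemma J_rpow_diff (hpos : ∀ x, 0 < J x)
    {c B : ℝ} (hc0 : 0 < c) (hc : ∀ z, Real.log (J z) ≤ -c) (hB : ∀ z, -B ≤ Real.log (J z))
    {s : ℝ} (hs : 1 ≤ s) (z : Omega 𝒜) :
    |J z ^ (1 : ℝ) - J z ^ s| ≤ J z * (B * (s - 1)) := by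
  have hp := hpos z
  have : s = 1 + (s - 1) := by ring
  rw [this, Real.rpow_add hp, Real.rpow_one, Real.rpow_def_of_pos hp, ← this]
  have h1 : Real.exp (Real.log (J z) * (s - 1)) ≤ 1 := by
    rw [Real.exp_le_one_iff]; nlinarith [hc z]
  have h2 := Real.add_one_le_exp (Real.log (J z) * (s - 1))
  have h3 : -(B * (s - 1)) ≤ Real.log (J z) * (s - 1) := by nlinarith [hB z]
  have : J z - J z * Real.exp (Real.log (J z) * (s - 1))
    = J z * (1 - Real.exp (Real.log (J z) * (s - 1))) := by ring
  rw [this, abs_of_nonneg (mul_nonneg hp.le (by linarith))]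
  exact mul_le_mul_of_nonneg_left (by linarith) hp.le

lemma T_diff (hpos : ∀ x, 0 < J x) (hsum : ∀ x : Omega 𝒜, ∑ q : 𝒜, J (cons q x) = 1)
    {c B : ℝ} (hc0 : 0 < c) (hc : ∀ z, Real.log (J z) ≤ -c) (hB : ∀ z, -B ≤ Real.log (J z))
    {s : ℝ} (hs : 1 ≤ s)
    {f : Omega 𝒜 → ℝ} {M : ℝ} (hf : ∀ z, |f z| ≤ M) (x : Omega 𝒜) :
    |T J s f x - T J 1 f x| ≤ M * B * (s - 1) := by
  unfold T
  rw [← Finset.sum_sub_distrib]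
  refine (Finset.abs_sum_le_sum_abs _ _).trans ?_
  calc _ ≤ ∑ q : 𝒜, J (cons q x) * (M * B * (s - 1)) := by
        refine Finset.sum_le_sum fun q _ => ?_
        rw [← sub_mul, abs_mul, abs_sub_comm]
        have h1 := J_rpow_diff hpos hc0 hc hB hs (cons q x)
        calc _ ≤ (J (cons q x) * (B * (s - 1))) * M :=
              mul_le_mul h1 (hf _) (abs_nonneg _) ((abs_nonneg _).trans h1)
          _ = _ := by ring
    _ = _ := by rw [← Finset.sum_mul, hsum, one_mul]

/-- coboundaries are killed -/
lemma R_cob (hpos : ∀ x, 0 < J x) (hsum : ∀ x : Omega 𝒜, ∑ q : 𝒜, J (cons q x) = 1)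
    {c B : ℝ} (hc0 : 0 < c) (hc : ∀ z, Real.log (J z) ≤ -c) (hB : ∀ z, -B ≤ Real.log (J z))
    {f : Omega 𝒜 → ℝ} {M : ℝ} (hf : ∀ z, |f z| ≤ M) (x : Omega 𝒜) :
    Tendsto (fun s : ℝ => (s - 1) * R J s (fun z => f z - T J 1 f z) x) (𝓝[>] 1) (𝓝 0) := by
  have hM : 0 ≤ M := (abs_nonneg _).trans (hf x)
  have hlim : Tendsto (fun s : ℝ => (s - 1) * M + M * B * (s - 1) / c) (𝓝[>] 1) (𝓝 0) := by
    have : Continuous (fun s : ℝ => (s - 1) * M + M * B * (s - 1) / c) := by fun_prop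
    have h := this.tendsto 1
    simp at h
    exact h.mono_left nhdsWithin_le_nhds
  refine squeeze_zero_norm' ?_ hlim
  filter_upwards [self_mem_nhdsWithin] with s hs
  have hs : 1 < s := hs
  have e : (fun z => f z - T J 1 f z)
      = fun z => (f z - T J s f z) + (T J s f z - T J 1 f z) := by funext z; ring
  have b1 : ∀ z, |f z - T J s f z| ≤ M + Real.exp (-(c * (s - 1))) * M := fun z =>
    (abs_sub _ _).trans (add_le_add (hf z) (T_bound hpos hsum hc hs.le hf z))
  have b2 := T_diff hpos hsum hc0 hc hB hs.le hf
  rw [e, R_add hpos hsum hc0 hc hs b1 b2, R_tele hpos hsum hc0 hc hs hf, mul_add]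
  refine (norm_add_le _ _).trans (add_le_add ?_ ?_)
  · rw [norm_mul, Real.norm_eq_abs, Real.norm_eq_abs, abs_of_pos (by linarith : 0 < s - 1)]
    refine mul_le_mul_of_nonneg_left ((T_bound hpos hsum hc hs.le hf x).trans ?_) (by linarith)
    have : Real.exp (-(c * (s - 1))) ≤ 1 := by
      rw [Real.exp_le_one_iff]; nlinarith
    nlinarith
  · rw [norm_mul, Real.norm_eq_abs, Real.norm_eq_abs, abs_of_pos (by linarith : 0 < s - 1)]
    exact R_bound hpos hsum hc0 hc hs b2 x

end ops
end GS

namespace GS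

section topo
variable {𝒜 : Type}

lemma dOmega_le {n : ℕ} {x y : Omega 𝒜} (h : ∀ i < n, x i = y i) :
    dOmega x y ≤ (1 / 2 : ℝ) ^ n := by
  unfold dOmega
  split_ifs with hxy
  · positivity
  · refine pow_le_pow_of_le_one (by norm_num) (by norm_num) ?_
    have hne : {k : ℕ | x k ≠ y k}.Nonempty := by
      by_contra hcon
      rw [Set.not_nonempty_iff_eq_empty] at hcon
      apply hxy; funext k
      by_contra hk
      have : k ∈ {k : ℕ | x k ≠ y k} := hk
      rw [hcon] at this; exact this
    have hmem := Nat.sInf_mem hne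
    by_contra hlt
    exact hmem (h _ (by omega))

lemma dOmega_nonneg (x y : Omega 𝒜) : 0 ≤ dOmega x y := by
  unfold dOmega; split_ifs <;> positivity

lemma holder_modulus {α : ℝ} (hα : 0 < α) {E : Type*} [NormedAddCommGroup E] {f : Omega 𝒜 → E}
    (hf : IsHolderW α f) : ∃ C : ℝ, 0 ≤ C ∧ ∀ (n : ℕ) (x y : Omega 𝒜), (∀ i < n, x i = y i) →
      ‖f x - f y‖ ≤ C * ((1 / 2 : ℝ) ^ α) ^ n := by
  obtain ⟨C, hC⟩ := hf
  refine ⟨max C 0, le_max_right _ _, fun n x y h => (hC x y).trans ?_⟩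
  refine mul_le_mul (le_max_left _ _) ?_ (Real.rpow_nonneg (dOmega_nonneg _ _) _) (le_max_right _ _)
  calc dOmega x y ^ α ≤ ((1 / 2 : ℝ) ^ n) ^ α :=
        Real.rpow_le_rpow (dOmega_nonneg _ _) (dOmega_le h) hα.le
    _ = _ := by
      rw [← Real.rpow_natCast, ← Real.rpow_natCast, ← Real.rpow_mul (by norm_num),
        ← Real.rpow_mul (by norm_num), mul_comm]

lemma r_lt_one {α : ℝ} (hα : 0 < α) : (1 / 2 : ℝ) ^ α < 1 :=
  Real.rpow_lt_one (by norm_num) (by norm_num) hα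

lemma r_pos (α : ℝ) : 0 < (1 / 2 : ℝ) ^ α := Real.rpow_pos_of_pos (by norm_num) _

lemma concat_agree {k : ℕ} (w : Fin k → 𝒜) (x y : Omega 𝒜) :
    ∀ i < k, concat w x i = concat w y i := by
  intro i hi; simp [concat, hi]

lemma cons_agree {k : ℕ} (q : 𝒜) {x y : Omega 𝒜} (h : ∀ i < k, x i = y i) :
    ∀ i < k + 1, cons q x i = cons q y i := by
  intro i hi
  cases i with
  | zero => rfl
  | succ i => exact h i (by omega)

/-- Bounded distortion. -/
lemma distortion {α : ℝ} (hα : 0 < α) {f : Omega 𝒜 → ℝ} (hf : IsHolderW α f) :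
    ∃ D : ℝ, 0 ≤ D ∧ ∀ (k : ℕ) (w : Fin k → 𝒜) (x y : Omega 𝒜),
      |birkhoff f k (concat w x) - birkhoff f k (concat w y)| ≤ D := by
  obtain ⟨C, hC0, hC⟩ := holder_modulus hα hf
  set r := (1 / 2 : ℝ) ^ α with hr
  have hr1 : r < 1 := r_lt_one hα
  have hr0 : 0 < r := r_pos α
  have key : ∀ (k : ℕ) (w : Fin k → 𝒜) (x y : Omega 𝒜),
      |birkhoff f k (concat w x) - birkhoff f k (concat w y)|
        ≤ C * ∑ i ∈ Finset.range (k + 1), r ^ i := by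
    intro k
    induction k with
    | zero => intro w x y; simp [birkhoff]; exact hC0
    | succ k ih =>
      intro w x y
      rw [← Fin.cons_self_tail w, concat_cons, concat_cons, birkhoff_cons, birkhoff_cons,
        Finset.sum_range_succ, mul_add]
      have h1 := ih (Fin.tail w) x y
      have h2 := hC (k + 1) _ _ (cons_agree (w 0) (concat_agree (Fin.tail w) x y))
      rw [Real.norm_eq_abs] at h2
      rw [abs_le] at *
      constructor <;> linarith [h1.1, h1.2, h2.1, h2.2]
  refine ⟨C * (1 - r)⁻¹, mul_nonneg hC0 (inv_nonneg.2 (by linarith)), fun k w x y =>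
    (key k w x y).trans (mul_le_mul_of_nonneg_left ?_ hC0)⟩
  rw [← tsum_geometric_of_lt_one hr0.le hr1]
  exact (summable_geometric_of_lt_one hr0.le hr1).sum_le_tsum _ (fun i _ => by positivity)

lemma JBirk_dist {J : Omega 𝒜 → ℝ} {D : ℝ} (hD : ∀ (k : ℕ) (w : Fin k → 𝒜) (x y : Omega 𝒜),
      |birkhoff (fun z => Real.log (J z)) k (concat w x)
        - birkhoff (fun z => Real.log (J z)) k (concat w y)| ≤ D)
    (k : ℕ) (w : Fin k → 𝒜) (x y : Omega 𝒜) :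
    Real.exp (-D) * JBirk J k w x ≤ JBirk J k w y := by
  unfold JBirk
  rw [← Real.exp_add]
  refine Real.exp_le_exp.2 ?_
  have := (abs_le.1 (hD k w x y)).2
  linarith

variable [TopologicalSpace 𝒜]

lemma continuous_cons (q : 𝒜) : Continuous (cons q : Omega 𝒜 → Omega 𝒜) := by
  refine continuous_pi fun n => ?_
  cases n with
  | zero => exact continuous_const
  | succ n => exact continuous_apply n

lemma continuous_shift : Continuous (shift : Omega 𝒜 → Omega 𝒜) :=
  continuous_pi fun n => continuous_apply (n + 1)

lemma continuous_concat {k : ℕ} (w : Fin k → 𝒜) : Continuous (concat w : Omega 𝒜 → Omega 𝒜) := by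
  refine continuous_pi fun n => ?_
  by_cases h : n < k
  · simp only [concat, h, dif_pos]; exact continuous_const
  · simp only [concat, h, dif_neg, not_false_eq_true]; exact continuous_apply _

lemma continuous_birkhoff {f : Omega 𝒜 → ℝ} (hf : Continuous f) (k : ℕ) :
    Continuous (birkhoff f k) := by
  unfold birkhoff
  exact continuous_finsetSum _ fun j _ => hf.comp (continuous_shift.iterate j)

lemma continuous_JBirk {J : Omega 𝒜 → ℝ} (hJ : Continuous J) (hpos : ∀ x, 0 < J x) (k : ℕ)
    (w : Fin k → 𝒜) : Continuous (JBirk J k w) := by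
  unfold JBirk
  exact Real.continuous_exp.comp ((continuous_birkhoff
    (hJ.log fun x => (hpos x).ne') k).comp (continuous_concat w))

lemma continuous_T [Fintype 𝒜] {J : Omega 𝒜 → ℝ} (hJ : Continuous J) (hpos : ∀ x, 0 < J x) (s : ℝ)
    {f : Omega 𝒜 → ℝ} (hf : Continuous f) : Continuous (T J s f) := by
  unfold T
  refine continuous_finsetSum _ fun q _ => ?_
  exact ((hJ.comp (continuous_cons q)).rpow_const fun x => Or.inl (hpos _).ne').mul
    (hf.comp (continuous_cons q))

lemma continuous_T_iter [Fintype 𝒜] {J : Omega 𝒜 → ℝ} (hJ : Continuous J) (hpos : ∀ x, 0 < J x)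
    (s : ℝ) (k : ℕ) : ∀ {f : Omega 𝒜 → ℝ} (_ : Continuous f), Continuous ((T J s)^[k] f) := by
  induction k with
  | zero => intro f hf; exact hf
  | succ k ih => intro f hf; exact ih (continuous_T hJ hpos s hf)

variable [DiscreteTopology 𝒜]

lemma isOpen_agree (n : ℕ) (x : Omega 𝒜) : IsOpen {y : Omega 𝒜 | ∀ i < n, x i = y i} := by
  have : {y : Omega 𝒜 | ∀ i < n, x i = y i} = ⋂ i ∈ Finset.range n, {y | x i = y i} := by
    ext y; simp
  rw [this]
  refine isOpen_biInter_finset fun i _ => ?_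
  exact (isOpen_discrete {a | x i = a}).preimage (continuous_apply i)

lemma continuous_of_holder {α : ℝ} (hα : 0 < α) {E : Type*} [NormedAddCommGroup E]
    {f : Omega 𝒜 → E} (hf : IsHolderW α f) : Continuous f := by
  obtain ⟨C, hC0, hC⟩ := holder_modulus hα hf
  rw [continuous_iff_continuousAt]
  intro x
  rw [Metric.continuousAt_iff']
  intro ε hε
  have hlim : Tendsto (fun n : ℕ => C * ((1 / 2 : ℝ) ^ α) ^ n) atTop (𝓝 0) := by
    simpa using (tendsto_pow_atTop_nhds_zero_of_lt_one (r_pos α).le (r_lt_one hα)).const_mul C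
  obtain ⟨n, hn⟩ := (hlim.eventually_lt_const hε).exists
  filter_upwards [(isOpen_agree n x).mem_nhds (by intro i _; rfl)] with y hy
  rw [dist_comm, dist_eq_norm]
  exact (hC n x y hy).trans_lt hn

lemma cont_modulus [Finite 𝒜] {f : Omega 𝒜 → ℝ} (hf : Continuous f) {ε : ℝ} (hε : 0 < ε) :
    ∃ n : ℕ, ∀ x y : Omega 𝒜, (∀ i < n, x i = y i) → |f x - f y| ≤ ε := by
  have h : ∀ x : Omega 𝒜, ∃ n : ℕ, ∀ y, (∀ i < n, x i = y i) → |f x - f y| < ε / 2 := by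
    intro x
    have hx : {y | |f x - f y| < ε / 2} ∈ 𝓝 x := by
      refine (isOpen_lt (by fun_prop) continuous_const).mem_nhds ?_
      simp [hε]
    rw [nhds_pi, Filter.mem_pi] at hx
    obtain ⟨I, hI, t, ht, hsub⟩ := hx
    obtain ⟨n, hn⟩ := hI.bddAbove
    refine ⟨n + 1, fun y hy => hsub ?_⟩
    intro i hi
    rw [← hy i (by have := hn hi; omega)]
    exact mem_of_mem_nhds (ht i)
  choose N hN using h
  obtain ⟨t, ht⟩ := isCompact_univ.elim_nhds_subcover
    (fun x : Omega 𝒜 => {y : Omega 𝒜 | ∀ i < N x, x i = y i})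
    (fun x _ => (isOpen_agree (N x) x).mem_nhds (by intro i _; rfl))
  refine ⟨t.sup N, fun x y hxy => ?_⟩
  have hx := ht.2 (Set.mem_univ x)
  simp only [Set.mem_iUnion] at hx
  obtain ⟨z, hz, hzx⟩ := hx
  have h1 := hN z x hzx
  have h2 := hN z y (fun i hi => (hzx i hi).trans
    (hxy i (lt_of_lt_of_le hi (Finset.le_sup (f := N) hz))))
  rw [abs_lt] at h1 h2
  rw [abs_le]
  constructor <;> linarith [h1.1, h1.2, h2.1, h2.2]

end topo

section conv
variable {𝒜 : Type} [Fintype 𝒜] {J : Omega 𝒜 → ℝ}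

lemma T_one_one (hsum : ∀ x : Omega 𝒜, ∑ q : 𝒜, J (cons q x) = 1) :
    T J 1 (fun _ => 1) = fun _ => 1 := by
  funext x; simp [T, hsum]

lemma sum_JBirk (hpos : ∀ x, 0 < J x) (hsum : ∀ x : Omega 𝒜, ∑ q : 𝒜, J (cons q x) = 1) (k : ℕ)
    (x : Omega 𝒜) : ∑ w : Fin k → 𝒜, JBirk J k w x = 1 := by
  have h := T_iter hpos 1 k (fun _ => 1) x
  rw [Function.iterate_fixed (T_one_one hsum)] at h
  simpa using h.symm

variable [TopologicalSpace 𝒜] [DiscreteTopology 𝒜]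

lemma osc_step (hpos : ∀ x, 0 < J x) (hsum : ∀ x : Omega 𝒜, ∑ q : 𝒜, J (cons q x) = 1)
    {D : ℝ} (hD0 : 0 ≤ D) (hD : ∀ (k : ℕ) (w : Fin k → 𝒜) (x y : Omega 𝒜),
      |birkhoff (fun z => Real.log (J z)) k (concat w x)
        - birkhoff (fun z => Real.log (J z)) k (concat w y)| ≤ D)
    {f : Omega 𝒜 → ℝ} (hf : Continuous f) {d : ℝ} (hd : ∀ x y, f x - f y ≤ d)
    {η : ℝ} (hη : 0 < η) :
    ∃ n : ℕ, ∀ x y, (T J 1)^[n] f x - (T J 1)^[n] f y ≤ (1 - Real.exp (-D)) * d + η := by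
  obtain ⟨n, hn⟩ := cont_modulus hf hη
  refine ⟨n, fun x y => ?_⟩
  obtain ⟨z, -, hz⟩ := isCompact_univ.exists_isMinOn ⟨x, Set.mem_univ x⟩ hf.continuousOn
  have hz' : ∀ u, 0 ≤ f u - f z := fun u => sub_nonneg.2 (hz (Set.mem_univ u))
  set e := Real.exp (-D) with he
  have he0 : 0 < e := Real.exp_pos _
  have he1 : e ≤ 1 := by rw [he, Real.exp_le_one_iff]; linarith
  have hx : ∀ u, (T J 1)^[n] f u - f z = ∑ w : Fin n → 𝒜, JBirk J n w u * (f (concat w u) - f z) := by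
    intro u
    rw [T_iter hpos]
    simp only [Real.rpow_one, mul_sub, Finset.sum_sub_distrib]
    rw [← Finset.sum_mul, sum_JBirk hpos hsum, one_mul]
  have h1 : e * ((T J 1)^[n] f x - f z) - e * η ≤ (T J 1)^[n] f y - f z := by
    rw [hx, hx]
    have : e * η = ∑ w : Fin n → 𝒜, JBirk J n w x * (e * η) := by
      rw [← Finset.sum_mul, sum_JBirk hpos hsum, one_mul]
    rw [this, Finset.mul_sum, ← Finset.sum_sub_distrib]
    refine Finset.sum_le_sum fun w _ => ?_
    have a1 := JBirk_dist hD n w x y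
    have a2 := (abs_le.1 (hn _ _ (concat_agree w x y))).2
    have a3 := mul_le_mul_of_nonneg_right a1 (hz' (concat w y))
    have a4 : 0 ≤ e * JBirk J n w x := (mul_pos he0 (JBirk_pos _ _ _ _)).le
    have a5 := mul_le_mul_of_nonneg_left a2 a4
    rw [← he] at a3
    nlinarith
  have h2 : (T J 1)^[n] f x - f z ≤ d := by
    rw [hx]
    calc _ ≤ ∑ w : Fin n → 𝒜, JBirk J n w x * d :=
          Finset.sum_le_sum fun w _ => mul_le_mul_of_nonneg_left (hd _ _) (JBirk_pos _ _ _ _).le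
      _ = d := by rw [← Finset.sum_mul, sum_JBirk hpos hsum, one_mul]
  nlinarith

lemma osc_conv (hJ : Continuous J) (hpos : ∀ x, 0 < J x)
    (hsum : ∀ x : Omega 𝒜, ∑ q : 𝒜, J (cons q x) = 1)
    {D : ℝ} (hD0 : 0 ≤ D) (hD : ∀ (k : ℕ) (w : Fin k → 𝒜) (x y : Omega 𝒜),
      |birkhoff (fun z => Real.log (J z)) k (concat w x)
        - birkhoff (fun z => Real.log (J z)) k (concat w y)| ≤ D)
    {f : Omega 𝒜 → ℝ} (hf : Continuous f) {M : ℝ} (hM : ∀ z, |f z| ≤ M)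
    {η : ℝ} (hη : 0 < η) :
    ∃ n : ℕ, ∀ x y, (T J 1)^[n] f x - (T J 1)^[n] f y ≤ η := by
  have he0 : 0 < Real.exp (-D) := Real.exp_pos _
  have he1 : Real.exp (-D) ≤ 1 := by rw [Real.exp_le_one_iff]; linarith
  have key : ∀ m : ℕ, ∀ η > 0, ∃ n : ℕ, ∀ x y, (T J 1)^[n] f x - (T J 1)^[n] f y
      ≤ (1 - Real.exp (-D)) ^ m * (2 * M) + η := by
    intro m
    induction m with
    | zero =>
      intro η hη
      refine ⟨0, fun x y => ?_⟩
      have h1 := abs_le.1 (hM x)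
      have h2 := abs_le.1 (hM y)
      simp only [Function.iterate_zero, id, pow_zero]
      linarith [h1.1, h1.2, h2.1, h2.2]
    | succ m ih =>
      intro η hη
      obtain ⟨n, hn⟩ := ih (η / 2) (by linarith)
      obtain ⟨p, hp⟩ := osc_step hpos hsum hD0 hD (continuous_T_iter hJ hpos 1 n hf) hn
        (η := η / 2) (by linarith)
      refine ⟨p + n, fun x y => ?_⟩
      rw [Function.iterate_add_apply]
      refine (hp x y).trans ?_
      rw [pow_succ]
      nlinarith
  have hlim : Tendsto (fun m : ℕ => (1 - Real.exp (-D)) ^ m * (2 * M)) atTop (𝓝 0) := by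
    simpa using (tendsto_pow_atTop_nhds_zero_of_lt_one (by linarith)
      (by linarith : 1 - Real.exp (-D) < 1)).mul_const (2 * M)
  obtain ⟨m, hm⟩ := (hlim.eventually_lt_const (half_pos hη)).exists
  obtain ⟨n, hn⟩ := key m (η / 2) (by linarith)
  exact ⟨n, fun x y => (hn x y).trans (by linarith)⟩

variable [MeasurableSpace 𝒜] [BorelSpace 𝒜]

lemma cont_integrable {E : Type*} [NormedAddCommGroup E] {μ : Measure (Omega 𝒜)}
    [IsFiniteMeasure μ] {f : Omega 𝒜 → E}
    (hf : Continuous f) : Integrable f μ :=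
  hf.integrable_of_hasCompactSupport (HasCompactSupport.of_compactSpace f)

lemma integral_T (hJ : Continuous J) (hpos : ∀ x, 0 < J x) {μ : Measure (Omega 𝒜)}
    (hμ : IsGMeasure J μ)
    {f : Omega 𝒜 → ℝ} (hf : Continuous f) : ∫ z, T J 1 f z ∂μ = ∫ z, f z ∂μ := by
  have h := hμ.2 (fun z => (f z : ℂ)) (by fun_prop)
  have e : ∀ x, ruelle (fun z => Real.log (J z)) (fun z => (f z : ℂ)) x = ((T J 1 f x : ℝ) : ℂ) := by
    intro x
    simp only [ruelle, T, Real.rpow_one]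
    push_cast
    refine Finset.sum_congr rfl fun q _ => ?_
    rw [Real.exp_log (hpos _)]; simp
  simp_rw [e] at h
  rw [integral_complex_ofReal, integral_complex_ofReal] at h
  exact_mod_cast h

lemma integral_T_iter (hJ : Continuous J) (hpos : ∀ x, 0 < J x) {μ : Measure (Omega 𝒜)}
    (hμ : IsGMeasure J μ) (k : ℕ) : ∀
    {f : Omega 𝒜 → ℝ} (_ : Continuous f), ∫ z, (T J 1)^[k] f z ∂μ = ∫ z, f z ∂μ := by
  induction k with
  | zero => intro f hf; rfl
  | succ k ih =>
    intro f hf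
    rw [Function.iterate_succ, Function.comp, ih (continuous_T hJ hpos 1 hf), integral_T hJ hpos hμ hf]

lemma exists_bound {f : Omega 𝒜 → ℝ} (hf : Continuous f) : ∃ M, ∀ z, |f z| ≤ M := by
  obtain ⟨M, hM⟩ := isCompact_univ.exists_bound_of_continuousOn hf.continuousOn
  exact ⟨M, fun z => hM z (Set.mem_univ z)⟩

lemma conv_mean (hJ : Continuous J) (hpos : ∀ x, 0 < J x)
    (hsum : ∀ x : Omega 𝒜, ∑ q : 𝒜, J (cons q x) = 1)
    {D : ℝ} (hD0 : 0 ≤ D) (hD : ∀ (k : ℕ) (w : Fin k → 𝒜) (x y : Omega 𝒜),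
      |birkhoff (fun z => Real.log (J z)) k (concat w x)
        - birkhoff (fun z => Real.log (J z)) k (concat w y)| ≤ D)
    {μ : Measure (Omega 𝒜)} (hμ : IsGMeasure J μ)
    {f : Omega 𝒜 → ℝ} (hf : Continuous f) {η : ℝ} (hη : 0 < η) :
    ∃ n : ℕ, ∀ x, |(T J 1)^[n] f x - ∫ z, f z ∂μ| ≤ η := by
  haveI := hμ.1
  obtain ⟨M, hM⟩ := exists_bound hf
  obtain ⟨n, hn⟩ := osc_conv hJ hpos hsum hD0 hD hf hM hη
  refine ⟨n, fun x => ?_⟩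
  have hi : Integrable ((T J 1)^[n] f) μ := cont_integrable (continuous_T_iter hJ hpos 1 n hf)
  rw [← integral_T_iter hJ hpos hμ n hf]
  have h1 : ∫ z, (T J 1)^[n] f z ∂μ ≤ ∫ z, ((T J 1)^[n] f x + η) ∂μ :=
    integral_mono hi (integrable_const _) fun z => by
      show (T J 1)^[n] f z ≤ (T J 1)^[n] f x + η
      linarith [hn z x]
  have h2 : ∫ z, ((T J 1)^[n] f x - η) ∂μ ≤ ∫ z, (T J 1)^[n] f z ∂μ :=
    integral_mono (integrable_const _) hi fun z => by
      show (T J 1)^[n] f x - η ≤ (T J 1)^[n] f z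
      linarith [hn x z]
  simp only [integral_const, probReal_univ, one_smul] at h1 h2
  rw [abs_le]; constructor <;> linarith

end conv
end GS

namespace GS

section lim
variable {𝒜 : Type} [Fintype 𝒜] {J : Omega 𝒜 → ℝ}

lemma exists_cob (hpos : ∀ x, 0 < J x) (hsum : ∀ x : Omega 𝒜, ∑ q : 𝒜, J (cons q x) = 1)
    {c : ℝ} (hc0 : 0 < c) (hc : ∀ z, Real.log (J z) ≤ -c)
    {f : Omega 𝒜 → ℝ} {M : ℝ} (hf : ∀ z, |f z| ≤ M) (n : ℕ) :
    ∃ (g : Omega 𝒜 → ℝ) (N : ℝ), (∀ z, |g z| ≤ N) ∧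
      ∀ z, g z - T J 1 g z = f z - (T J 1)^[n] f z := by
  induction n with
  | zero => exact ⟨fun _ => 0, 0, by simp, by simp [T]⟩
  | succ n ih =>
    obtain ⟨g, N, hN, hg⟩ := ih
    have hb : ∀ z, |(T J 1)^[n] f z| ≤ M := by
      intro z
      simpa using T_iter_bound hpos hsum hc le_rfl n hf z
    refine ⟨fun z => g z + (T J 1)^[n] f z, N + M, fun z =>
      (abs_add_le _ _).trans (add_le_add (hN z) (hb z)), fun z => ?_⟩
    have h := congrFun (T_iter_add (J := J) 1 1 g ((T J 1)^[n] f)) z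
    simp only [Function.iterate_one] at h
    rw [h, Function.iterate_succ_apply']
    linarith [hg z]

variable [TopologicalSpace 𝒜] [DiscreteTopology 𝒜] [MeasurableSpace 𝒜] [BorelSpace 𝒜]

lemma limD (hJ : Continuous J) (hpos : ∀ x, 0 < J x)
    (hsum : ∀ x : Omega 𝒜, ∑ q : 𝒜, J (cons q x) = 1)
    {c B : ℝ} (hc0 : 0 < c) (hc : ∀ z, Real.log (J z) ≤ -c) (hB : ∀ z, -B ≤ Real.log (J z))
    {D : ℝ} (hD0 : 0 ≤ D) (hD : ∀ (k : ℕ) (w : Fin k → 𝒜) (x y : Omega 𝒜),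
      |birkhoff (fun z => Real.log (J z)) k (concat w x)
        - birkhoff (fun z => Real.log (J z)) k (concat w y)| ≤ D)
    {μ : Measure (Omega 𝒜)} (hμ : IsGMeasure J μ)
    {f : Omega 𝒜 → ℝ} (hf : Continuous f) (x : Omega 𝒜) :
    Tendsto (fun s : ℝ => (s - 1) * R J s f x - (∫ z, f z ∂μ) * ((s - 1) * R J s (fun _ => 1) x))
      (𝓝[>] 1) (𝓝 0) := by
  rw [Metric.tendsto_nhds]
  intro η hη
  set I := ∫ z, f z ∂μ with hI
  obtain ⟨M, hM⟩ := exists_bound hf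
  obtain ⟨n, hn⟩ := conv_mean hJ hpos hsum hD0 hD hμ hf (η := η * c / 2) (by positivity)
  obtain ⟨g, N, hN, hg⟩ := exists_cob hpos hsum hc0 hc hM n
  have h1 := R_cob hpos hsum hc0 hc hB hN x
  rw [Metric.tendsto_nhds] at h1
  filter_upwards [h1 (η / 2) (by linarith), self_mem_nhdsWithin] with s h2 hs
  have hs : 1 < s := hs
  have b1 : ∀ z, |g z - T J 1 g z| ≤ N + Real.exp (-(c * (1 - 1))) * N := fun z =>
    (abs_sub _ _).trans (add_le_add (hN z) (T_bound hpos hsum hc le_rfl hN z))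
  have e : f = fun z => I * 1 + ((g z - T J 1 g z) + ((T J 1)^[n] f z - I)) := by
    funext z; rw [hg z]; ring
  have e2 : R J s f x = I * R J s (fun _ => 1) x
      + (R J s (fun z => g z - T J 1 g z) x + R J s (fun z => (T J 1)^[n] f z - I) x) := by
    conv_lhs => rw [e]
    rw [R_add hpos hsum hc0 hc hs (M := |I|) (f := fun _ => I * 1) (by simp)
      (fun z => (abs_add_le _ _).trans (add_le_add (b1 z) (hn z))),
      R_add hpos hsum hc0 hc hs b1 hn, R_smul]
  have h3 := R_bound hpos hsum hc0 hc hs hn x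
  have h4 : η * c / 2 / c = η / 2 := by field_simp
  rw [h4] at h3
  rw [Real.dist_eq, sub_zero] at h2 ⊢
  have e3 : (s - 1) * R J s f x - I * ((s - 1) * R J s (fun _ => 1) x)
    = (s - 1) * R J s (fun z => g z - T J 1 g z) x
      + (s - 1) * R J s (fun z => (T J 1)^[n] f z - I) x := by rw [e2]; ring
  rw [e3]
  refine (abs_add_le _ _).trans_lt ?_
  have h5 : |(s - 1) * R J s (fun z => (T J 1)^[n] f z - I) x| ≤ η / 2 := by
    rw [abs_mul, abs_of_pos (by linarith : 0 < s - 1)]; exact h3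
  linarith

lemma limE (hpos : ∀ x, 0 < J x)
    (hsum : ∀ x : Omega 𝒜, ∑ q : 𝒜, J (cons q x) = 1)
    {c B : ℝ} (hc0 : 0 < c) (hc : ∀ z, Real.log (J z) ≤ -c) (hB : ∀ z, -B ≤ Real.log (J z))
    (x : Omega 𝒜) :
    Tendsto (fun s : ℝ => (s - 1) * R J s (T J 1 (fun z => - Real.log (J z))) x)
      (𝓝[>] 1) (𝓝 1) := by
  have hB0 : 0 < B := by linarith [hc x, hB x]
  have hφ : ∀ z, |-Real.log (J z)| ≤ B := fun z => by
    rw [abs_le]; constructor <;> linarith [hc z, hB z]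
  have hlim : Tendsto (fun s : ℝ => B * (s - 1) + (s - 1) * B ^ 2 / c) (𝓝[>] 1) (𝓝 0) := by
    have : Continuous (fun s : ℝ => B * (s - 1) + (s - 1) * B ^ 2 / c) := by fun_prop
    have h := this.tendsto 1
    simp at h
    exact h.mono_left nhdsWithin_le_nhds
  rw [tendsto_iff_norm_sub_tendsto_zero]
  refine squeeze_zero' (Eventually.of_forall fun _ => norm_nonneg _) ?_ hlim
  have hsm : ∀ᶠ s : ℝ in 𝓝[>] 1, s < 1 + 1 / B :=
    nhdsWithin_le_nhds (Iio_mem_nhds (by have : 0 < 1 / B := by positivity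
                                         linarith))
  filter_upwards [self_mem_nhdsWithin, hsm] with s hs hs2
  have hs : 1 < s := hs
  have hsB : (s - 1) * B ≤ 1 := by
    have : s - 1 ≤ 1 / B := by linarith
    rwa [le_div_iff₀ hB0] at this
  have one_b : ∀ z : Omega 𝒜, |(fun _ : Omega 𝒜 => (1 : ℝ)) z| ≤ 1 := by simp
  set φ : Omega 𝒜 → ℝ := fun z => - Real.log (J z) with hφd
  set err : Omega 𝒜 → ℝ := fun z => 1 - T J s (fun _ => 1) z - (s - 1) * T J 1 φ z with herr
  have berr : ∀ z, |err z| ≤ (s - 1) ^ 2 * B ^ 2 := by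
    intro z
    have e1 : err z = ∑ q : 𝒜, J (cons q z) *
        (-(Real.exp (Real.log (J (cons q z)) * (s - 1)) - 1 - Real.log (J (cons q z)) * (s - 1))) := by
      have e0 : err z = (∑ q : 𝒜, J (cons q z)) - T J s (fun _ => 1) z - (s - 1) * T J 1 φ z := by
        rw [hsum z]
      rw [e0]
      simp only [T]
      rw [Finset.mul_sum, ← Finset.sum_sub_distrib, ← Finset.sum_sub_distrib]
      refine Finset.sum_congr rfl fun q _ => ?_
      have hp := hpos (cons q z)
      have e3 : J (cons q z) ^ s = J (cons q z) * Real.exp (Real.log (J (cons q z)) * (s - 1)) := by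
        have : s = 1 + (s - 1) := by ring
        conv_lhs => rw [this, Real.rpow_add hp, Real.rpow_one, Real.rpow_def_of_pos hp]
      rw [e3, Real.rpow_one]
      simp only [hφd]
      ring
    rw [e1]
    refine (Finset.abs_sum_le_sum_abs _ _).trans ?_
    calc _ ≤ ∑ q : 𝒜, J (cons q z) * ((s - 1) ^ 2 * B ^ 2) := by
          refine Finset.sum_le_sum fun q _ => ?_
          have hp := hpos (cons q z)
          rw [abs_mul, abs_of_pos hp, abs_neg]
          refine mul_le_mul_of_nonneg_left ?_ hp.le
          have hl : |Real.log (J (cons q z)) * (s - 1)| ≤ B * (s - 1) := by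
            rw [abs_mul, abs_of_pos (by linarith : 0 < s - 1), ← abs_neg (Real.log _)]
            exact mul_le_mul_of_nonneg_right (hφ _) (by linarith)
          refine (Real.abs_exp_sub_one_sub_id_le (hl.trans (by linarith))).trans ?_
          rw [← sq_abs]
          calc _ ≤ (B * (s - 1)) ^ 2 := pow_le_pow_left₀ (abs_nonneg _) hl 2
            _ = _ := by ring
      _ = _ := by rw [← Finset.sum_mul, hsum, one_mul]
  have bT : ∀ z, |(s - 1) * T J 1 φ z| ≤ (s - 1) * B := by
    intro z
    rw [abs_mul, abs_of_pos (by linarith : 0 < s - 1)]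
    refine mul_le_mul_of_nonneg_left ?_ (by linarith)
    simpa using T_bound hpos hsum hc le_rfl hφ z
  have t := R_tele hpos hsum hc0 hc hs one_b x
  have e : (fun z => (1 : ℝ) - T J s (fun _ => 1) z) = fun z => (s - 1) * T J 1 φ z + err z := by
    funext z; simp only [herr]; ring
  rw [e, R_add hpos hsum hc0 hc hs bT berr, R_smul] at t
  have hR : |R J s err x| ≤ (s - 1) * B ^ 2 / c := by
    have h := R_bound hpos hsum hc0 hc hs berr x
    have h2 : (s - 1) ^ 2 * B ^ 2 / c = (s - 1) * ((s - 1) * B ^ 2 / c) := by ring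
    rw [h2] at h
    exact le_of_mul_le_mul_left h (by linarith)
  have hT := T_diff hpos hsum hc0 hc hB hs.le one_b x
  rw [T_one_one hsum] at hT
  have e4 : (s - 1) * R J s (T J 1 φ) x - 1 = (T J s (fun _ => 1) x - 1) - R J s err x := by
    linarith
  rw [Real.norm_eq_abs, e4]
  refine (abs_sub _ _).trans (add_le_add ?_ hR)
  linarith

lemma limF (hJ : Continuous J) (hpos : ∀ x, 0 < J x)
    (hsum : ∀ x : Omega 𝒜, ∑ q : 𝒜, J (cons q x) = 1)
    {c B : ℝ} (hc0 : 0 < c) (hc : ∀ z, Real.log (J z) ≤ -c) (hB : ∀ z, -B ≤ Real.log (J z))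
    {D : ℝ} (hD0 : 0 ≤ D) (hD : ∀ (k : ℕ) (w : Fin k → 𝒜) (x y : Omega 𝒜),
      |birkhoff (fun z => Real.log (J z)) k (concat w x)
        - birkhoff (fun z => Real.log (J z)) k (concat w y)| ≤ D)
    {μ : Measure (Omega 𝒜)} (hμ : IsGMeasure J μ)
    {f : Omega 𝒜 → ℝ} (hf : Continuous f) (x : Omega 𝒜) :
    Tendsto (fun s : ℝ => (s - 1) * R J s f x)
      (𝓝[>] 1) (𝓝 ((∫ z, - Real.log (J z) ∂μ)⁻¹ * ∫ z, f z ∂μ)) := by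
  have := hμ.1
  have hl : Continuous (fun z => - Real.log (J z)) := (hJ.log fun x => (hpos x).ne').neg
  have hpos' : 0 < ∫ z, - Real.log (J z) ∂μ := by
    have h : ∫ _z, c ∂μ ≤ ∫ z, - Real.log (J z) ∂μ :=
      integral_mono (integrable_const _) (cont_integrable hl) fun z => by
        show c ≤ - Real.log (J z)
        linarith [hc z]
    simp only [integral_const, probReal_univ, one_smul] at h
    linarith
  have h1 := limE hpos hsum hc0 hc hB x
  have h2 := limD hJ hpos hsum hc0 hc hB hD0 hD hμ (continuous_T hJ hpos 1 hl) x
  rw [integral_T hJ hpos hμ hl] at h2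
  set h := ∫ z, - Real.log (J z) ∂μ
  have h3 : Tendsto (fun s : ℝ => (s - 1) * R J s (fun _ => 1) x) (𝓝[>] 1) (𝓝 h⁻¹) := by
    have h4 := (h1.sub h2).const_mul h⁻¹
    simp only [sub_zero, mul_one] at h4
    refine h4.congr fun s => ?_
    field_simp
    ring
  have h5 := (limD hJ hpos hsum hc0 hc hB hD0 hD hμ hf x).add (h3.const_mul (∫ z, f z ∂μ))
  rw [zero_add, mul_comm] at h5
  refine h5.congr fun s => ?_
  ring

/-! Entropy -/

lemma integral_shift (hJ : Continuous J) (hpos : ∀ x, 0 < J x)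
    (hsum : ∀ x : Omega 𝒜, ∑ q : 𝒜, J (cons q x) = 1)
    {μ : Measure (Omega 𝒜)} (hμ : IsGMeasure J μ) {f : Omega 𝒜 → ℝ} (hf : Continuous f) :
    ∫ z, f (shift z) ∂μ = ∫ z, f z ∂μ := by
  rw [← integral_T hJ hpos hμ (f := fun z => f (shift z)) (hf.comp continuous_shift)]
  congr 1
  funext z
  simp only [T, shift_cons, Real.rpow_one]
  rw [← Finset.sum_mul, hsum, one_mul]

lemma integral_birkhoff (hJ : Continuous J) (hpos : ∀ x, 0 < J x)
    (hsum : ∀ x : Omega 𝒜, ∑ q : 𝒜, J (cons q x) = 1)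
    {μ : Measure (Omega 𝒜)} (hμ : IsGMeasure J μ) {f : Omega 𝒜 → ℝ} (hf : Continuous f) (n : ℕ) :
    ∫ z, birkhoff f n z ∂μ = n * ∫ z, f z ∂μ := by
  have := hμ.1
  unfold birkhoff
  have hi : ∀ j ∈ Finset.range n, Integrable (fun z => f (shift^[j] z)) μ := fun j _ =>
    cont_integrable (hf.comp (continuous_shift.iterate j))
  rw [integral_finsetSum _ hi]
  have h : ∀ j : ℕ, ∫ z, f (shift^[j] z) ∂μ = ∫ z, f z ∂μ := by
    intro j
    induction j with
    | zero => rfl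
    | succ j ih =>
      rw [← ih, ← integral_shift hJ hpos hsum hμ (f := fun z => f (shift^[j] z))
        (hf.comp (continuous_shift.iterate j))]
      rfl
  simp [h]

lemma isClopen_cyl {n : ℕ} (w : Fin n → 𝒜) : IsClopen (cyl w) := by
  have : cyl w = ⋂ i : Fin n, (fun x : Omega 𝒜 => x i) ⁻¹' {w i} := by
    ext x; simp [cyl]
  rw [this]
  exact isClopen_iInter_of_finite fun i => (isClopen_discrete _).preimage (continuous_apply _)

lemma concat_mem_cyl {n : ℕ} (w w' : Fin n → 𝒜) (z : Omega 𝒜) :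
    concat w' z ∈ cyl w ↔ w' = w := by
  simp only [cyl, Set.mem_setOf_eq, concat, Fin.is_lt, dif_pos]
  exact ⟨fun h => funext h, fun h i => congrFun h i⟩

lemma measure_cyl (hJ : Continuous J) (hpos : ∀ x, 0 < J x)
    {μ : Measure (Omega 𝒜)} (hμ : IsGMeasure J μ) {n : ℕ} (w : Fin n → 𝒜) :
    (μ (cyl w)).toReal = ∫ z, JBirk J n w z ∂μ := by
  have := hμ.1
  have hc : Continuous ((cyl w).indicator (1 : Omega 𝒜 → ℝ)) :=
    continuous_one.indicator (by simp [(isClopen_cyl w).frontier_eq])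
  have h1 := integral_T_iter hJ hpos hμ n hc
  rw [integral_indicator_one (isClopen_cyl w).isOpen.measurableSet] at h1
  rw [← Measure.real, ← h1]
  congr 1
  funext z
  rw [T_iter hpos, Finset.sum_eq_single w]
  · rw [Set.indicator_of_mem ((concat_mem_cyl w w z).2 rfl)]; simp
  · intro w' _ hne
    rw [Set.indicator_of_notMem (fun h => hne ((concat_mem_cyl w w' z).1 h))]; simp
  · simp

lemma integral_negMulLog (hJ : Continuous J) (hpos : ∀ x, 0 < J x)
    (hsum : ∀ x : Omega 𝒜, ∑ q : 𝒜, J (cons q x) = 1)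
    {μ : Measure (Omega 𝒜)} (hμ : IsGMeasure J μ) (n : ℕ) :
    ∑ w : Fin n → 𝒜, ∫ z, Real.negMulLog (JBirk J n w z) ∂μ
      = n * ∫ z, - Real.log (J z) ∂μ := by
  have := hμ.1
  have hl : Continuous (fun z => Real.log (J z)) := hJ.log fun x => (hpos x).ne'
  have hi2 : ∀ w ∈ (Finset.univ : Finset (Fin n → 𝒜)),
      Integrable (fun z => Real.negMulLog (JBirk J n w z)) μ := fun w _ =>
    cont_integrable (Real.continuous_negMulLog.comp (continuous_JBirk hJ hpos n w))
  rw [← integral_finsetSum _ hi2,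
    integral_neg, mul_neg, ← integral_birkhoff hJ hpos hsum hμ hl,
    ← integral_T_iter hJ hpos hμ n (continuous_birkhoff hl n), ← integral_neg]
  congr 1
  funext z
  rw [T_iter hpos, ← Finset.sum_neg_distrib]
  refine Finset.sum_congr rfl fun w _ => ?_
  rw [Real.negMulLog, Real.rpow_one]
  conv_lhs => rw [JBirk, Real.log_exp]
  rw [JBirk]; ring

lemma entropy_lower (hJ : Continuous J) (hpos : ∀ x, 0 < J x)
    (hsum : ∀ x : Omega 𝒜, ∑ q : 𝒜, J (cons q x) = 1)
    {μ : Measure (Omega 𝒜)} (hμ : IsGMeasure J μ) (n : ℕ) :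
    n * ∫ z, - Real.log (J z) ∂μ ≤ blockEntropy μ n := by
  have := hμ.1
  rw [← integral_negMulLog hJ hpos hsum hμ]
  unfold blockEntropy
  refine Finset.sum_le_sum fun w _ => ?_
  rw [measure_cyl hJ hpos hμ]
  exact Real.concaveOn_negMulLog.le_map_integral Real.continuous_negMulLog.continuousOn isClosed_Ici
    (Eventually.of_forall fun z => (JBirk_pos J n w z).le)
    (cont_integrable (continuous_JBirk hJ hpos n w))
    (cont_integrable (Real.continuous_negMulLog.comp (continuous_JBirk hJ hpos n w)))

lemma entropy_upper (hJ : Continuous J) (hpos : ∀ x, 0 < J x)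
    (hsum : ∀ x : Omega 𝒜, ∑ q : 𝒜, J (cons q x) = 1)
    {D : ℝ} (hD : ∀ (k : ℕ) (w : Fin k → 𝒜) (x y : Omega 𝒜),
      |birkhoff (fun z => Real.log (J z)) k (concat w x)
        - birkhoff (fun z => Real.log (J z)) k (concat w y)| ≤ D)
    {μ : Measure (Omega 𝒜)} (hμ : IsGMeasure J μ) (n : ℕ) :
    blockEntropy μ n ≤ n * (∫ z, - Real.log (J z) ∂μ) + D := by
  have := hμ.1
  have hi : ∀ w : Fin n → 𝒜, Integrable (JBirk J n w) μ := fun w =>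
    cont_integrable (continuous_JBirk hJ hpos n w)
  have hi2 : ∀ w : Fin n → 𝒜, Integrable (fun z => Real.negMulLog (JBirk J n w z)) μ := fun w =>
    cont_integrable (Real.continuous_negMulLog.comp (continuous_JBirk hJ hpos n w))
  have hD1 : D = ∑ w : Fin n → 𝒜, ∫ z, JBirk J n w z * D ∂μ := by
    rw [← integral_finsetSum _ fun w _ => (hi w).mul_const D]
    simp_rw [← Finset.sum_mul, sum_JBirk hpos hsum]
    simp
  rw [hD1, ← integral_negMulLog hJ hpos hsum hμ, ← Finset.sum_add_distrib]
  unfold blockEntropy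
  refine Finset.sum_le_sum fun w _ => ?_
  rw [measure_cyl hJ hpos hμ, ← integral_add (hi2 w) ((hi w).mul_const D)]
  set p := ∫ z, JBirk J n w z ∂μ with hp
  have hlow : ∀ z, Real.log (JBirk J n w z) - D ≤ Real.log p := by
    intro z
    have h : ∫ _u, Real.exp (-D) * JBirk J n w z ∂μ ≤ p :=
      integral_mono (integrable_const _) (hi w) fun u => JBirk_dist hD n w z u
    simp only [integral_const, probReal_univ, one_smul] at h
    have h2 := Real.log_le_log (mul_pos (Real.exp_pos _) (JBirk_pos J n w z)) h
    rw [Real.log_mul (Real.exp_pos _).ne' (JBirk_pos J n w z).ne', Real.log_exp] at h2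
    linarith
  have e : Real.negMulLog p = ∫ z, JBirk J n w z * (- Real.log p) ∂μ := by
    rw [integral_mul_const, ← hp, Real.negMulLog]; ring
  rw [e]
  refine integral_mono ((hi w).mul_const _) ((hi2 w).add ((hi w).mul_const D)) fun z => ?_
  show JBirk J n w z * (- Real.log p) ≤ Real.negMulLog (JBirk J n w z) + JBirk J n w z * D
  rw [Real.negMulLog]
  nlinarith [mul_le_mul_of_nonneg_left (hlow z) (JBirk_pos J n w z).le]

lemma entropy_eq (hJ : Continuous J) (hpos : ∀ x, 0 < J x)
    (hsum : ∀ x : Omega 𝒜, ∑ q : 𝒜, J (cons q x) = 1)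
    {D : ℝ} (hD : ∀ (k : ℕ) (w : Fin k → 𝒜) (x y : Omega 𝒜),
      |birkhoff (fun z => Real.log (J z)) k (concat w x)
        - birkhoff (fun z => Real.log (J z)) k (concat w y)| ≤ D)
    {μ : Measure (Omega 𝒜)} (hμ : IsGMeasure J μ) :
    KSentropy μ = ∫ z, - Real.log (J z) ∂μ := by
  have hlow : ∀ n : ℕ, ∫ z, - Real.log (J z) ∂μ ≤ blockEntropy μ (n + 1) / (n + 1) := by
    intro n
    have h := entropy_lower hJ hpos hsum hμ (n + 1)
    rw [le_div_iff₀ (by positivity)]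
    push_cast at h
    linarith
  refine le_antisymm ?_ (le_ciInf hlow)
  have hlim : Tendsto (fun n : ℕ => (∫ z, - Real.log (J z) ∂μ) + D * (1 / ((n : ℝ) + 1))) atTop
      (𝓝 (∫ z, - Real.log (J z) ∂μ)) := by
    simpa using (tendsto_one_div_add_atTop_nhds_zero_nat (𝕜 := ℝ)).const_mul D |>.const_add
      (∫ z, - Real.log (J z) ∂μ)
  refine ge_of_tendsto' hlim fun n => ?_
  refine (ciInf_le ⟨_, Set.forall_mem_range.2 hlow⟩ n).trans ?_
  have h := entropy_upper hJ hpos hsum hD hμ (n + 1)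
  push_cast at h
  have hn : (0 : ℝ) < n + 1 := by positivity
  rw [div_le_iff₀ hn, add_mul, mul_assoc, one_div_mul_cancel hn.ne']
  linarith

end lim

section final
variable {𝒜 : Type} [Fintype 𝒜] {J : Omega 𝒜 → ℝ}

lemma J_lt_one (hcard : 2 ≤ Fintype.card 𝒜) (hpos : ∀ x, 0 < J x)
    (hsum : ∀ x : Omega 𝒜, ∑ q : 𝒜, J (cons q x) = 1) (z : Omega 𝒜) : J z < 1 := by
  obtain ⟨q, hq⟩ := Fintype.exists_ne_of_one_lt_card (by omega) (z 0)
  have e : z = cons (z 0) (shift z) := by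
    funext n; cases n <;> rfl
  have h := Finset.single_lt_sum (f := fun q => J (cons q (shift z))) hq (Finset.mem_univ _)
    (Finset.mem_univ _) (hpos _) (fun _ _ _ => (hpos _).le)
  rw [hsum] at h
  simp only [← e] at h
  exact h

lemma zetaPlus_hasSum (hpos : ∀ x, 0 < J x)
    (hsum : ∀ x : Omega 𝒜, ∑ q : 𝒜, J (cons q x) = 1)
    {c : ℝ} (hc0 : 0 < c) (hc : ∀ z, Real.log (J z) ≤ -c) {s : ℝ} (hs : 1 < s)
    {a : Omega 𝒜 → ℂ} {M : ℝ} (hM : ∀ z, ‖a z‖ ≤ M) (x : Omega 𝒜) :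
    HasSum (fun k : ℕ => ∑ w : Fin (k + 1) → 𝒜,
      a (concat w x) * (((JBirk J (k + 1) w x) ^ s : ℝ) : ℂ))
      ((R J s (fun z => (a z).re) x : ℂ) + (R J s (fun z => (a z).im) x : ℂ) * Complex.I) := by
  rw [Complex.hasSum_iff]
  have h1 := (R_summable hpos hsum hc0 hc hs (f := fun z => (a z).re)
    (fun z => (Complex.abs_re_le_norm _).trans (hM z)) x).hasSum
  have h2 := (R_summable hpos hsum hc0 hc hs (f := fun z => (a z).im)
    (fun z => (Complex.abs_im_le_norm _).trans (hM z)) x).hasSum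
  constructor
  · convert h1 using 1
    · funext k
      rw [T_iter hpos, Complex.re_sum]
      refine Finset.sum_congr rfl fun w _ => ?_
      rw [Complex.re_mul_ofReal, mul_comm]
    · simp [R]
  · convert h2 using 1
    · funext k
      rw [T_iter hpos, Complex.im_sum]
      refine Finset.sum_congr rfl fun w _ => ?_
      rw [Complex.im_mul_ofReal, mul_comm]
    · simp [R]

end final

end GS

namespace GS

/-- Corollary `cor-igualdade-zetamenos-zetamais` of the paper.
For `log J` an `α`-Hölder `g`-function with unique `g`-measure `μ`, `a` α-Hölder and
`x, y ∈ Ω` fixed, `lim_{s→1⁺}(s−1)ζ₊(s) = lim_{s→1⁺}(s−1)ζ₋(s)`, and both limits equal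
`(1/h_μ(σ)) ∫ a dμ`. -/
theorem statement2 {𝒜 : Type} [Fintype 𝒜] [TopologicalSpace 𝒜] [DiscreteTopology 𝒜]
    [MeasurableSpace 𝒜] [BorelSpace 𝒜] (hcard : 2 ≤ Fintype.card 𝒜)
    (α : ℝ) (hα : α ∈ Set.Ioo (0 : ℝ) 1)
    (J : Omega 𝒜 → ℝ) (hJ : IsGFunction J)
    (hHolJ : IsHolderW α (fun z => Real.log (J z)))
    (μ : Measure (Omega 𝒜)) (hμ : IsGMeasure J μ)
    (huniq : ∀ ν : Measure (Omega 𝒜), IsGMeasure J ν → ν = μ)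
    (a : Omega 𝒜 → ℂ) (ha : IsHolderW α a) (x y : Omega 𝒜) :
    Tendsto (fun s : ℝ => ((s : ℂ) - 1) * zetaPlus J a x s) (𝓝[>] (1 : ℝ))
        (𝓝 ((((KSentropy μ)⁻¹ : ℝ) : ℂ) * ∫ z, a z ∂μ)) ∧
      Tendsto (fun s : ℝ => ((s : ℂ) - 1) * zetaMinus J a x y s) (𝓝[>] (1 : ℝ))
        (𝓝 ((((KSentropy μ)⁻¹ : ℝ) : ℂ) * ∫ z, a z ∂μ)) := by
  obtain ⟨hJc, hpos, hsum⟩ := hJ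
  have hα0 : 0 < α := hα.1
  have := hμ.1
  obtain ⟨D, hD0, hD⟩ := distortion hα0 hHolJ
  have hl : Continuous (fun z => Real.log (J z)) := hJc.log fun x => (hpos x).ne'
  have hac : Continuous a := continuous_of_holder hα0 ha
  obtain ⟨B, hB'⟩ := exists_bound hl
  have hB : ∀ z, -B ≤ Real.log (J z) := fun z => (abs_le.1 (hB' z)).1
  obtain ⟨c, hc0, hc⟩ : ∃ c : ℝ, 0 < c ∧ ∀ z, Real.log (J z) ≤ -c := by
    obtain ⟨z, -, hz⟩ := isCompact_univ.exists_isMaxOn ⟨x, Set.mem_univ x⟩ hl.continuousOn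
    refine ⟨-Real.log (J z), ?_, fun u => ?_⟩
    · linarith [Real.log_neg (hpos z) (J_lt_one hcard hpos hsum z)]
    · rw [neg_neg]; exact hz (Set.mem_univ u)
  obtain ⟨M, hM⟩ : ∃ M, ∀ z, ‖a z‖ ≤ M := by
    obtain ⟨M, hM⟩ := isCompact_univ.exists_bound_of_continuousOn hac.continuousOn
    exact ⟨M, fun z => hM z (Set.mem_univ z)⟩
  have hplus : Tendsto (fun s : ℝ => ((s : ℂ) - 1) * zetaPlus J a x s) (𝓝[>] (1 : ℝ))
        (𝓝 ((((KSentropy μ)⁻¹ : ℝ) : ℂ) * ∫ z, a z ∂μ)) := by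
    rw [entropy_eq hJc hpos hsum hD hμ]
    have h1 := limF hJc hpos hsum hc0 hc hB hD0 hD hμ (f := fun z => (a z).re)
      (Complex.continuous_re.comp hac) x
    have h2 := limF hJc hpos hsum hc0 hc hB hD0 hD hμ (f := fun z => (a z).im)
      (Complex.continuous_im.comp hac) x
    have h3 := ((Complex.continuous_ofReal.tendsto _).comp h1).add
      (((Complex.continuous_ofReal.tendsto _).comp h2).mul_const Complex.I)
    have e : (∫ z, a z ∂μ) = ((∫ z, (a z).re ∂μ : ℝ) : ℂ) + ((∫ z, (a z).im ∂μ : ℝ) : ℂ) * Complex.I := by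
      have h := integral_re_add_im (𝕜 := ℂ) (cont_integrable (μ := μ) hac)
      simpa using h.symm
    rw [e]
    convert h3.congr' ?_ using 2
    · push_cast; ring
    · filter_upwards [self_mem_nhdsWithin] with s hs
      rw [zetaPlus, (zetaPlus_hasSum hpos hsum hc0 hc hs hM x).tsum_eq]
      simp only [Function.comp]
      push_cast; ring
  refine ⟨hplus, ?_⟩
  obtain ⟨C, hC0, hC⟩ := holder_modulus hα0 ha
  set r := (1 / 2 : ℝ) ^ α with hr
  have hr1 : r < 1 := r_lt_one hα0
  have hr0 : 0 < r := r_pos α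
  have hsm : Summable (fun k : ℕ => C * r ^ (k + 1)) := ((summable_nat_add_iff 1).2
      (summable_geometric_of_lt_one hr0.le hr1)).mul_left C
  set Q := ∑' k : ℕ, C * r ^ (k + 1) with hQ
  have hdiff : ∀ s : ℝ, 1 < s → ‖zetaMinus J a x y s - zetaPlus J a x s‖ ≤ Q := by
    intro s hs
    set F : ℕ → ℂ := fun k => ∑ w : Fin (k + 1) → 𝒜,
      (a (concat w y) - a (concat w x)) * (((JBirk J (k + 1) w x) ^ s : ℝ) : ℂ) with hF
    have hFb : ∀ k, ‖F k‖ ≤ C * r ^ (k + 1) := by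
      intro k
      refine (norm_sum_le _ _).trans ?_
      calc _ ≤ ∑ w : Fin (k + 1) → 𝒜, (C * r ^ (k + 1)) * (JBirk J (k + 1) w x) ^ s := by
            refine Finset.sum_le_sum fun w _ => ?_
            have hp := Real.rpow_pos_of_pos (JBirk_pos J (k + 1) w x) s
            rw [norm_mul, Complex.norm_real, Real.norm_of_nonneg hp.le]
            exact mul_le_mul_of_nonneg_right (hC (k + 1) _ _ (concat_agree w y x)) hp.le
        _ = (C * r ^ (k + 1)) * (T J s)^[k + 1] (fun _ => 1) x := by
            rw [T_iter hpos, ← Finset.mul_sum]; simp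
        _ ≤ (C * r ^ (k + 1)) * 1 := by
            refine mul_le_mul_of_nonneg_left ?_ (by positivity)
            have h := (le_abs_self _).trans (T_iter_bound hpos hsum hc hs.le (k + 1)
              (f := fun _ => 1) (M := 1) (by simp) x)
            rw [mul_one] at h
            refine h.trans (pow_le_one₀ (Real.exp_pos _).le ?_)
            rw [Real.exp_le_one_iff]; nlinarith
        _ = _ := mul_one _
    have hFs : Summable F := Summable.of_norm_bounded hsm hFb
    have hP := zetaPlus_hasSum hpos hsum hc0 hc hs hM x
    have e : zetaMinus J a x y s = zetaPlus J a x s + ∑' k, F k := by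
      rw [zetaMinus, zetaPlus, ← hP.summable.tsum_add hFs]
      congr 1; funext k
      simp only [hF]
      rw [← Finset.sum_add_distrib]
      exact Finset.sum_congr rfl fun w _ => by ring
    rw [e, add_sub_cancel_left]
    exact tsum_of_norm_bounded hsm.hasSum hFb
  have hz : Tendsto (fun s : ℝ => ((s : ℂ) - 1) * (zetaMinus J a x y s - zetaPlus J a x s))
      (𝓝[>] (1 : ℝ)) (𝓝 0) := by
    have hlim : Tendsto (fun s : ℝ => (s - 1) * Q) (𝓝[>] 1) (𝓝 0) := by
      have : Continuous (fun s : ℝ => (s - 1) * Q) := by fun_prop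
      have h := this.tendsto 1
      simp only [sub_self, zero_mul] at h
      exact h.mono_left nhdsWithin_le_nhds
    refine squeeze_zero_norm' ?_ hlim
    filter_upwards [self_mem_nhdsWithin] with s hs
    have hs : 1 < s := hs
    have e : ‖(s : ℂ) - 1‖ = s - 1 := by
      rw [← Complex.ofReal_one, ← Complex.ofReal_sub, Complex.norm_real,
        Real.norm_of_nonneg (by linarith)]
    rw [norm_mul, e]
    exact mul_le_mul_of_nonneg_left (hdiff s hs) (by linarith)
  have h := hplus.add hz
  rw [add_zero] at h
  refine h.congr fun s => ?_
  ring

end GS
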